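/- Let σ be a relational first-order language. If a countable σ-structure M is MM-homogeneous, then Age(M) has the mono-amalgamation property (MAP): for all A, B1, B2 in Age(M), every monomorphism f1 : A → B1 and every embedding f2 : A → B2, there exist D in Age(M), an embedding g1 : B1 → D, and a monomorphism g2 : B2 → D such that g1 ∘ f1 = g2 ∘ f2. -/

import Mathlib

open FirstOrder Language Structure CategoryTheory

universe u v w

variable {L : FirstOrder.Language.{u, v}}

/-- The age of `M`: the class of finite structures which embed into `M`. -/
def finAge (L : FirstOrder.Language.{u, v}) (M : Type w) [L.Structure M] :
    Set (Bundled.{w} L.Structure) :=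
  {B | Finite B ∧ Nonempty (B ↪[L] M)}

/-- A class of structures has the mono-amalgamation property (MAP). -/
def HasMAP (C : Set (Bundled.{w} L.Structure)) : Prop :=
  ∀ A B₁ B₂ : Bundled.{w} L.Structure, A ∈ C → B₁ ∈ C → B₂ ∈ C →
    ∀ (f₁ : A →[L] B₁), Function.Injective f₁ → ∀ (f₂ : A ↪[L] B₂),
      ∃ D ∈ C, ∃ (g₁ : B₁ ↪[L] D) (g₂ : B₂ →[L] D),
        Function.Injective g₂ ∧ ∀ a : A, g₁ (f₁ a) = g₂ (f₂ a)

/-- `M` is MM-homogeneous: every monomorphism between finite substructures of `M`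
extends to an injective endomorphism of `M`. -/
def IsMMHomogeneous (L : FirstOrder.Language.{u, v}) (M : Type w) [L.Structure M] : Prop :=
  ∀ (A B : L.Substructure M), (A : Set M).Finite → (B : Set M).Finite →
    ∀ f : A →[L] B, Function.Injective f →
      ∃ g : M →[L] M, Function.Injective g ∧ ∀ a : A, g (a : M) = (f a : M)

/-!
Embed `B₁` and `B₂` in `M` by `e₁` and `e₂`. The partial map `e₂ (f₂ a) ↦ e₁ (f₁ a)` is a
monomorphism between finite substructures of `M`, so it extends to an injective endomorphism `g`
of `M`. The substructure generated by `e₁ B₁` and `g (e₂ B₂)` is the amalgam, with `e₁` and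
`g ∘ e₂` as the two maps.
-/

/-- Local finiteness of a structure: every finitely generated substructure is finite, as for locally
finite groups. This is what keeps amalgams of finite structures inside `M` finite. -/
def IsLocallyFinite (L : FirstOrder.Language.{u, v}) (M : Type w) [L.Structure M] : Prop :=
  ∀ S : L.Substructure M, S.FG → Finite S

theorem isLocallyFinite_of_isRelational [L.IsRelational] {M : Type w} [L.Structure M] :
    IsLocallyFinite L M :=
  fun _ hS => hS.finite

theorem IsLocallyFinite.finite_range_sup_range {M : Type w} [L.Structure M]
    (hM : IsLocallyFinite L M) {A B : Type*} [L.Structure A] [L.Structure B] [Finite A] [Finite B]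
    (f : A →[L] M) (g : B →[L] M) : Finite ↥(f.range ⊔ g.range) :=
  hM _ ((FG.of_finite.range f).sup (FG.of_finite.range g))

theorem IsLocallyFinite.exists_factorization_mem_finAge {M : Type w} [L.Structure M]
    (hM : IsLocallyFinite L M) {A B : Type*} [L.Structure A] [L.Structure B] [Finite A] [Finite B]
    (f : A ↪[L] M) (g : B →[L] M) :
    ∃ D ∈ finAge L M, ∃ (i : D ↪[L] M) (f' : A ↪[L] D) (g' : B →[L] D),
      i.comp f' = f ∧ i.toHom.comp g' = g := by
  let D : L.Substructure M := f.toHom.range ⊔ g.range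
  have hfD (a : A) : f a ∈ D :=
    (le_sup_left : f.toHom.range ≤ D) (f.toHom.mem_range_self a)
  have hgD (b : B) : g b ∈ D :=
    (le_sup_right : g.range ≤ D) (g.mem_range_self b)
  exact ⟨Bundled.of D, ⟨hM.finite_range_sup_range f.toHom g, ⟨D.subtype⟩⟩, D.subtype,
    f.codRestrict D hfD, g.codRestrict D hgD,
    f.subtype_comp_codRestrict D hfD, g.subtype_comp_codRestrict D hgD⟩

theorem IsMMHomogeneous.extend_monomorphism {M : Type w} [L.Structure M]
    (hM : IsMMHomogeneous L M) {A : Type*} [L.Structure A] [Finite A] (e : A ↪[L] M)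
    {f : A →[L] M} (hf : Function.Injective f) :
    ∃ g : M →[L] M, Function.Injective g ∧ ∀ a, g (e a) = f a := by
  let φ : e.toHom.range →[L] f.range :=
    (f.codRestrict f.range f.mem_range_self).comp e.equivRange.symm.toHom
  have hφ : Function.Injective φ :=
    (hf.codRestrict f.mem_range_self).comp e.equivRange.symm.injective
  obtain ⟨g, hg, hgφ⟩ := hM _ _ (Set.finite_range e) (Set.finite_range f) φ hφ
  refine ⟨g, hg, fun a => ?_⟩
  calc
    g (e a) = φ (e.equivRange a) := hgφ (e.equivRange a)
    _ = f (e.equivRange.symm (e.equivRange a)) := rfl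
    _ = f a := by rw [FirstOrder.Language.Equiv.symm_apply_apply]

theorem age_hasMAP_of_mm_homogeneous_general (L : FirstOrder.Language.{u, v}) (M : Type w)
    [L.Structure M] (hfin : IsLocallyFinite L M) (h : IsMMHomogeneous L M) :
    HasMAP (finAge L M) := by
  rintro A B₁ B₂ ⟨_, -⟩ ⟨_, ⟨e₁⟩⟩ ⟨_, ⟨e₂⟩⟩ f₁ hf₁ f₂
  obtain ⟨g, hg, hgf⟩ := h.extend_monomorphism (e₂.comp f₂) (f := e₁.toHom.comp f₁)
    (e₁.injective.comp hf₁)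
  obtain ⟨D, hD, i, g₁, g₂, hg₁, hg₂⟩ :=
    hfin.exists_factorization_mem_finAge e₁ (g.comp e₂.toHom)
  have hg₁_apply (b : B₁) : i (g₁ b) = e₁ b := DFunLike.congr_fun hg₁ b
  have hg₂_apply (b : B₂) : i (g₂ b) = g (e₂ b) := DFunLike.congr_fun hg₂ b
  have hg₂_injective : Function.Injective g₂ := fun x y hxy =>
    e₂.injective (hg (by rw [← hg₂_apply, ← hg₂_apply, hxy]))
  refine ⟨D, hD, g₁, g₂, hg₂_injective, fun a => i.injective ?_⟩
  calc
    i (g₁ (f₁ a)) = e₁ (f₁ a) := hg₁_apply (f₁ a)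
    _ = g (e₂ (f₂ a)) := (hgf a).symm
    _ = i (g₂ (f₂ a)) := (hg₂_apply (f₂ a)).symm

theorem age_hasMAP_of_mm_homogeneous (L : FirstOrder.Language.{u, v}) [L.IsRelational]
    (M : Type w) [L.Structure M] [Countable M] (h : IsMMHomogeneous L M) :
    HasMAP (finAge L M) :=
  age_hasMAP_of_mm_homogeneous_general L M isLocallyFinite_of_isRelational h
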